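/- The function d₂(x) = π₂(x) − C₂·Li₂(x) has at least 29 sign changes on the interval (2, 2^21): there exist real numbers x₀ < x₁ < ⋯ < x_{29} in (2, 2^21) such that d₂(x_i)·d₂(x_{i+1}) < 0 for all 0 ≤ i < 29. -/

import Mathlib

open Real Filter Set

/-- `Li₂(x) = ∫₂ˣ dt/(log t)²`. -/
noncomputable def Li2 (x : ℝ) : ℝ := ∫ t in (2:ℝ)..x, 1 / (Real.log t) ^ 2

/-- `π₂(x)`: the number of primes `p` with `p+2` also prime and `p+2 ≤ x`. -/
noncomputable def piTwin (x : ℝ) : ℕ :=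
  Nat.card {p : ℕ | p.Prime ∧ (p + 2).Prime ∧ ((p : ℝ) + 2) ≤ x}

/-- The twin prime constant `C₂ = 2·∏_{p prime, p>2} (1 − 1/(p−1)²)`. -/
noncomputable def C2 : ℝ :=
  2 * ∏' p : {p : ℕ // p.Prime ∧ 2 < p}, (1 - 1 / (((p : ℕ) : ℝ) - 1) ^ 2)

/-- `d₂(x) = π₂(x) − C₂·Li₂(x)`. -/
noncomputable def d2 (x : ℝ) : ℝ := (piTwin x : ℝ) - C2 * Li2 x

/-!
Thirty increasing points at which `d2` alternates in sign are exhibited, starting with a negative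
value. The count `π₂(6m + 1)` is evaluated by the kernel: a twin prime pair other than `(3, 5)` has
the form `(6k + 5, 6k + 7)`, and primality is coprimality with a factorial. The constant `C₂` is
`2 * ∏ (1 - 1 / (p - 1) ^ 2)` over the odd primes below `N`, up to a tail that lies between a
telescoping product and `1`. Finally `Li₂(exp v) = ∫ exp u / u ^ 2` over `[log 2, v]`, where `exp`
is bracketed by multiples of its Taylor polynomial, so that everything reduces to rational
arithmetic.
-/

section KernelFold

variable {M : Type*}

/-- The fold of `f` over the interval `[a, b)` by `d` rounds of bisection. The kernel unfolds this
recursor faster than a compiled structural recursion. -/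
def bisectFoldAux (op : M → M → M) (e : M) (f : ℕ → M) (d : ℕ) : ℕ → ℕ → M :=
  Nat.rec (fun a b => bif a.blt b then f a else e)
    (fun _ fold a b => op (fold a ((a + b) / 2)) (fold ((a + b) / 2) b)) d

/-- The fold of `f` over the interval `[a, b)` by repeated bisection. The recursion depth is
logarithmic in `b - a`, so that the kernel can evaluate long folds. -/
def bisectFold (op : M → M → M) (e : M) (f : ℕ → M) (a b : ℕ) : M :=
  bisectFoldAux op e f ((b - a).log2 + 1) a b

variable [CommMonoid M]

@[to_additive]
theorem bisectFoldAux_eq_prod (f : ℕ → M) {d a b : ℕ} (hab : a ≤ b) (hb : b ≤ a + 2 ^ d) :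
    bisectFoldAux (· * ·) 1 f d a b = ∏ i ∈ Finset.Ico a b, f i := by
  induction d generalizing a b with
  | zero =>
    obtain rfl | rfl : b = a ∨ b = a + 1 := by omega
    · simp [bisectFoldAux, cond_eq_ite]
    · simp [bisectFoldAux, cond_eq_ite]
  | succ d ih =>
    rw [pow_succ'] at hb
    calc bisectFoldAux (· * ·) 1 f (d + 1) a b
      _ = bisectFoldAux (· * ·) 1 f d a ((a + b) / 2) *
          bisectFoldAux (· * ·) 1 f d ((a + b) / 2) b := rfl
      _ = _ := by
        rw [ih (by omega) (by omega), ih (by omega) (by omega),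
          Finset.prod_Ico_consecutive _ (by omega) (by omega)]

@[to_additive]
theorem bisectFold_eq_prod (f : ℕ → M) {a b : ℕ} (hab : a ≤ b) :
    bisectFold (· * ·) 1 f a b = ∏ i ∈ Finset.Ico a b, f i :=
  bisectFoldAux_eq_prod f hab (by have := Nat.lt_log2_self (n := b - a); omega)

end KernelFold

section Sieve

open scoped Nat

theorem coprime_factorial_iff_prime {B n : ℕ} (hBn : B < n) (hn : n < (B + 1) ^ 2) (h1 : 1 < n) :
    n.Coprime B ! ↔ n.Prime := by
  refine ⟨fun h => ?_, fun h => ?_⟩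
  · by_contra hnp
    have hlt : n.minFac < B + 1 :=
      lt_of_pow_lt_pow_left₀ 2 (by omega) ((Nat.minFac_sq_le_self (by omega) hnp).trans_lt hn)
    have hp : n.minFac.Prime := Nat.minFac_prime (by omega)
    exact Nat.not_coprime_of_dvd_of_dvd hp.one_lt (Nat.minFac_dvd n)
      (hp.dvd_factorial.2 (by omega)) h
  · rw [h.coprime_iff_not_dvd, h.dvd_factorial]
    omega

/-- A factorial such that the numbers `m ∈ [n, n ^ 2)` with `m < (B + 1) ^ 2` coprime to it are the
primes. It is the same number `B !` for all `n > B`, so that the kernel evaluates it only once. -/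
def sieveModulus (B n : ℕ) : ℕ := if n ≤ B then (n - 1)! else B !

theorem coprime_sieveModulus_iff_prime {B n m : ℕ} (hn : 1 < n) (hnm : n ≤ m) (hm : m < n ^ 2)
    (hmB : m < (B + 1) ^ 2) : m.Coprime (sieveModulus B n) ↔ m.Prime := by
  rw [sieveModulus]
  split_ifs with h
  · exact coprime_factorial_iff_prime (by omega) (by rwa [Nat.sub_add_cancel hn.le]) (by omega)
  · exact coprime_factorial_iff_prime (by omega) hmB (by omega)

end Sieve

section TwinCount

theorem eq_three_or_eq_six_mul_add_five {p : ℕ} (hp : p.Prime) (hp2 : (p + 2).Prime) :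
    p = 3 ∨ ∃ k, p = 6 * k + 5 := by
  refine or_iff_not_imp_left.2 fun hne => ⟨p / 6, ?_⟩
  have := hp.two_le
  have h2 : ¬ 2 ∣ p + 2 := mt (Nat.prime_dvd_prime_iff_eq Nat.prime_two hp2).1 (by omega)
  have h3 : ¬ 3 ∣ p := mt (Nat.prime_dvd_prime_iff_eq Nat.prime_three hp).1 (by omega)
  have h3' : ¬ 3 ∣ p + 2 := mt (Nat.prime_dvd_prime_iff_eq Nat.prime_three hp2).1 (by omega)
  obtain h | h | h | h | h | h : p % 6 = 0 ∨ p % 6 = 1 ∨ p % 6 = 2 ∨ p % 6 = 3 ∨ p % 6 = 4 ∨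
    p % 6 = 5 := by omega
  all_goals omega

theorem piTwin_six_mul_add_one {m : ℕ} (hm : 0 < m) :
    piTwin (6 * m + 1) =
      1 + ∑ k ∈ Finset.range m, if (6 * k + 5).Prime ∧ (6 * k + 7).Prime then 1 else 0 := by
  have hset : {p : ℕ | p.Prime ∧ (p + 2).Prime ∧ (p : ℝ) + 2 ≤ 6 * m + 1} =
      insert 3 (((Finset.range m).filter fun k => (6 * k + 5).Prime ∧ (6 * k + 7).Prime).image
        (6 * · + 5)) := by
    ext p
    have hcast : (p : ℝ) + 2 ≤ 6 * m + 1 ↔ p + 2 ≤ 6 * m + 1 := by norm_cast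
    simp only [mem_ofPred_eq, hcast, Finset.coe_insert, Finset.coe_image, Finset.coe_filter,
      Finset.mem_range, mem_insert_iff, mem_image]
    constructor
    · rintro ⟨hp, hp2, hle⟩
      refine (eq_three_or_eq_six_mul_add_five hp hp2).imp_right ?_
      rintro ⟨k, rfl⟩
      exact ⟨k, ⟨by omega, hp, hp2⟩, rfl⟩
    · rintro (rfl | ⟨k, ⟨hk, hp, hp2⟩, rfl⟩)
      · exact ⟨Nat.prime_three, Nat.prime_five, by omega⟩
      · exact ⟨hp, hp2, by omega⟩
  have hinj : Function.Injective (6 * · + 5 : ℕ → ℕ) := fun a b h => by simpa using h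
  rw [piTwin, hset, Nat.card_coe_set_eq, Set.ncard_coe_finset,
    Finset.card_insert_of_notMem (by simp), Finset.card_image_of_injective _ hinj,
    Finset.card_filter, add_comm]

/-- The number of `k ∈ [a, b)` for which `6k + 5` and `6k + 7` are both prime, in a form the kernel
can evaluate; correct as long as `6b + 1 < 1230 ^ 2`. -/
def twinCount (a b : ℕ) : ℕ :=
  bisectFold (· + ·) 0 (fun k =>
    if ((6 * k + 5) * (6 * k + 7)).Coprime (sieveModulus 1229 (6 * k + 5)) then 1 else 0) a b

theorem twinCount_eq_sum {a b : ℕ} (hab : a ≤ b) (hb : b ≤ 252000) :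
    twinCount a b =
      ∑ k ∈ Finset.Ico a b, if (6 * k + 5).Prime ∧ (6 * k + 7).Prime then 1 else 0 := by
  rw [twinCount, bisectFold_eq_sum _ hab]
  refine Finset.sum_congr rfl fun k hk => ?_
  rw [Finset.mem_Ico] at hk
  have h5 : (6 * k + 5).Coprime (sieveModulus 1229 (6 * k + 5)) ↔ (6 * k + 5).Prime :=
    coprime_sieveModulus_iff_prime (by omega) le_rfl (by nlinarith) (by omega)
  have h7 : (6 * k + 7).Coprime (sieveModulus 1229 (6 * k + 5)) ↔ (6 * k + 7).Prime :=
    coprime_sieveModulus_iff_prime (by omega) (by omega) (by nlinarith) (by omega)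
  simp only [Nat.coprime_mul_iff_left, h5, h7]

theorem twinCount_add {a b c : ℕ} (hab : a ≤ b) (hbc : b ≤ c) (hc : c ≤ 252000) :
    twinCount a b + twinCount b c = twinCount a c := by
  rw [twinCount_eq_sum hab (by omega), twinCount_eq_sum hbc hc, twinCount_eq_sum (by omega) hc,
    Finset.sum_Ico_consecutive _ hab hbc]

theorem piTwin_eq_twinCount {m : ℕ} (hm : 0 < m) (hm' : m ≤ 252000) :
    piTwin (6 * m + 1) = 1 + twinCount 0 m := by
  rw [piTwin_six_mul_add_one hm, twinCount_eq_sum m.zero_le hm', Finset.range_eq_Ico]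

end TwinCount

section TwinPrimeConstant

open scoped Topology

/-- The factor of the integer `n` in the product defining `C2`: it is `1` unless `n` is an odd
prime. -/
noncomputable def twinFactor (n : ℕ) : ℝ :=
  if n.Prime ∧ 2 < n then 1 - 1 / ((n : ℝ) - 1) ^ 2 else 1

theorem multipliable_twinFactor : Multipliable twinFactor := by
  have hsq : Summable fun n : ℕ => 1 / ((n : ℝ) - 1) ^ 2 := by
    rw [← summable_nat_add_iff 1]
    simp
  have hsum : Summable fun n : ℕ => if n.Prime ∧ 2 < n then -(1 / ((n : ℝ) - 1) ^ 2) else 0 := by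
    refine .of_norm_bounded hsq fun n => ?_
    split_ifs
    · rw [norm_neg, norm_of_nonneg (by positivity)]
    · rw [norm_zero]; positivity
  convert Real.multipliable_one_add_of_summable hsum using 2 with n
  simp only [twinFactor]
  split_ifs <;> ring

theorem C2_eq_two_mul_tprod : C2 = 2 * ∏' n, twinFactor n := by
  have hind : twinFactor =
      {p : ℕ | p.Prime ∧ 2 < p}.mulIndicator fun p => 1 - 1 / ((p : ℝ) - 1) ^ 2 := by
    funext n
    simp only [twinFactor, mulIndicator_apply, mem_ofPred_eq]
  rw [hind, ← tprod_subtype]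
  rfl

theorem tendsto_prod_twinFactor (M : ℕ) :
    Tendsto (fun N => 2 * (∏ n ∈ Finset.range M, twinFactor n) * ∏ n ∈ Finset.Ico M N, twinFactor n)
      atTop (𝓝 C2) := by
  rw [C2_eq_two_mul_tprod]
  refine (multipliable_twinFactor.hasProd.tendsto_prod_nat.const_mul 2).congr' ?_
  filter_upwards [eventually_ge_atTop M] with N hN
  rw [mul_assoc, Finset.prod_range_mul_prod_Ico _ hN]

theorem one_sub_one_div_sub_one_sq {x : ℝ} (hx : x ≠ 1) :
    1 - 1 / (x - 1) ^ 2 = x * (x - 2) / (x - 1) ^ 2 := by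
  have : x - 1 ≠ 0 := sub_ne_zero.2 hx
  field_simp
  ring

theorem twinFactor_le_one (n : ℕ) : twinFactor n ≤ 1 := by
  rw [twinFactor]
  split_ifs
  · exact sub_le_self _ (by positivity)
  · exact le_rfl

theorem le_twinFactor {n : ℕ} (hn : 3 ≤ n) :
    (n : ℝ) * (n - 2) / (n - 1) ^ 2 ≤ twinFactor n := by
  have hn' : (3 : ℝ) ≤ n := by exact_mod_cast hn
  rw [← one_sub_one_div_sub_one_sq (by linarith), twinFactor]
  split_ifs
  · exact le_rfl
  · exact sub_le_self _ (by positivity)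

theorem twinFactor_nonneg (n : ℕ) : 0 ≤ twinFactor n := by
  rcases lt_or_ge n 3 with hn | hn
  · simp [twinFactor, show ¬ 2 < n by omega]
  · have hn' : (3 : ℝ) ≤ n := by exact_mod_cast hn
    exact (div_nonneg (mul_nonneg (by linarith) (by linarith)) (by positivity)).trans
      (le_twinFactor hn)

theorem prod_Ico_twinFactor_le_one (M N : ℕ) : ∏ n ∈ Finset.Ico M N, twinFactor n ≤ 1 :=
  Finset.prod_le_one (fun n _ => twinFactor_nonneg n) fun n _ => twinFactor_le_one n

/-- The product of the lower bounds `n (n - 2) / (n - 1) ^ 2` telescopes. -/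
theorem le_prod_Ico_twinFactor {M N : ℕ} (hM : 3 ≤ M) (hMN : M ≤ N) :
    ((M : ℝ) - 2) / (M - 1) ≤ ∏ n ∈ Finset.Ico M N, twinFactor n := by
  have hM' : (3 : ℝ) ≤ M := by exact_mod_cast hM
  have htel : ((M : ℝ) - 2) / (M - 1) * ((N - 1) / (N - 2)) ≤
      ∏ n ∈ Finset.Ico M N, twinFactor n := by
    induction N, hMN using Nat.le_induction with
    | base =>
      rw [Finset.Ico_self, Finset.prod_empty, div_mul_div_comm, mul_comm, div_self]
      exact mul_ne_zero (by linarith) (by linarith)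
    | succ N hMN ih =>
      have hN' : (3 : ℝ) ≤ N := by exact_mod_cast hM.trans hMN
      rw [Finset.prod_Ico_succ_top hMN]
      calc ((M : ℝ) - 2) / (M - 1) * (((N + 1 : ℕ) - 1) / ((N + 1 : ℕ) - 2))
        _ = (M - 2) / (M - 1) * ((N - 1) / (N - 2)) * (N * (N - 2) / (N - 1) ^ 2) := by
          have : (N : ℝ) - 1 ≠ 0 := by linarith
          have : (N : ℝ) - 2 ≠ 0 := by linarith
          have : (M : ℝ) - 1 ≠ 0 := by linarith
          push_cast
          rw [show (N : ℝ) + 1 - 2 = N - 1 by ring]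
          field_simp
          ring
        _ ≤ _ := by
          gcongr
          · exact div_nonneg (mul_nonneg (by linarith) (by linarith)) (by positivity)
          · exact Finset.prod_nonneg fun n _ => twinFactor_nonneg n
          · exact le_twinFactor (hM.trans hMN)
  have hN' : (M : ℝ) ≤ N := by exact_mod_cast hMN
  refine le_trans (le_mul_of_one_le_right ?_ ?_) htel
  · exact div_nonneg (by linarith) (by linarith)
  · rw [one_le_div (by linarith)]
    linarith

theorem C2_le (M : ℕ) : C2 ≤ 2 * ∏ n ∈ Finset.range M, twinFactor n := by
  refine le_of_tendsto' (tendsto_prod_twinFactor M) fun N => ?_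
  refine mul_le_of_le_one_right ?_ (prod_Ico_twinFactor_le_one M N)
  exact mul_nonneg two_pos.le (Finset.prod_nonneg fun n _ => twinFactor_nonneg n)

theorem le_C2 {M : ℕ} (hM : 3 ≤ M) :
    2 * (∏ n ∈ Finset.range M, twinFactor n) * (((M : ℝ) - 2) / (M - 1)) ≤ C2 := by
  refine ge_of_tendsto (tendsto_prod_twinFactor M) ?_
  filter_upwards [eventually_ge_atTop M] with N hN
  have : 0 ≤ ∏ n ∈ Finset.range M, twinFactor n := Finset.prod_nonneg fun n _ => twinFactor_nonneg n
  gcongr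
  exact le_prod_Ico_twinFactor hM hN

/-- The product of `f p` over the odd primes `p < N`, in a form the kernel can evaluate; correct
for `N ≤ 142 ^ 2`. -/
def oddPrimeProd (f : ℕ → ℕ) (N : ℕ) : ℕ :=
  bisectFold (· * ·) 1 (fun n => if n.Coprime (sieveModulus 141 n) then f n else 1) 3 N

theorem oddPrimeProd_eq_prod (f : ℕ → ℕ) {N : ℕ} (hN : 3 ≤ N) (hN' : N ≤ 20000) :
    oddPrimeProd f N = ∏ n ∈ Finset.Ico 3 N, if n.Prime ∧ 2 < n then f n else 1 := by
  rw [oddPrimeProd, bisectFold_eq_prod _ hN]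
  refine Finset.prod_congr rfl fun n hn => ?_
  rw [Finset.mem_Ico] at hn
  have hprime : n.Coprime (sieveModulus 141 n) ↔ n.Prime :=
    coprime_sieveModulus_iff_prime (by omega) le_rfl (by nlinarith) (by omega)
  simp only [hprime, and_iff_left (show 2 < n by omega)]

theorem prod_twinFactor_eq_div {N : ℕ} (hN : 3 ≤ N) (hN' : N ≤ 20000) :
    ∏ n ∈ Finset.range N, twinFactor n =
      oddPrimeProd (fun p => p * (p - 2)) N / oddPrimeProd (fun p => (p - 1) ^ 2) N := by
  have hsmall : ∏ n ∈ Finset.range 3, twinFactor n = 1 :=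
    Finset.prod_eq_one fun n hn => if_neg fun h => by simp at hn; omega
  rw [← Finset.prod_range_mul_prod_Ico _ hN, hsmall, one_mul, oddPrimeProd_eq_prod _ hN hN',
    oddPrimeProd_eq_prod _ hN hN', Nat.cast_prod, Nat.cast_prod, ← Finset.prod_div_distrib]
  refine Finset.prod_congr rfl fun n hn => ?_
  have hn3 : 3 ≤ n := (Finset.mem_Ico.1 hn).1
  rw [twinFactor]
  split_ifs
  · rw [one_sub_one_div_sub_one_sq (by norm_cast; omega), Nat.cast_mul, Nat.cast_pow,
      Nat.cast_sub (by omega), Nat.cast_sub (by omega), Nat.cast_one, Nat.cast_two]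
  · simp

theorem C2_bounds : 1.32026 ≤ C2 ∧ C2 ≤ 1.32034 := by
  have hnum : 132026 * 19999 * oddPrimeProd (fun p => (p - 1) ^ 2) 20000 ≤
        200000 * 19998 * oddPrimeProd (fun p => p * (p - 2)) 20000 ∧
      200000 * oddPrimeProd (fun p => p * (p - 2)) 20000 ≤
        132034 * oddPrimeProd (fun p => (p - 1) ^ 2) 20000 ∧
      0 < oddPrimeProd (fun p => (p - 1) ^ 2) 20000 := by decide +kernel
  have hlo := le_C2 (M := 20000) (by norm_num)
  have hhi := C2_le 20000
  rw [prod_twinFactor_eq_div (by norm_num) le_rfl] at hlo hhi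
  generalize oddPrimeProd (fun p => (p - 1) ^ 2) 20000 = b at *
  generalize oddPrimeProd (fun p => p * (p - 2)) 20000 = a at *
  rify at hnum
  obtain ⟨h1, h2, hb⟩ := hnum
  have hab : 1.32026 * 19999 / (2 * 19998) ≤ (a : ℝ) / b := (le_div_iff₀ hb).2 (by linarith)
  have hab' : (a : ℝ) / b ≤ 0.66017 := (div_le_iff₀ hb).2 (by linarith)
  push_cast at hlo
  exact ⟨by linarith, by linarith⟩

end TwinPrimeConstant

section ExpTaylor

open scoped Nat

/-- The Taylor polynomial `∑ k < n, u ^ k / k!` of the exponential function. -/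
def expTaylor {K : Type*} [Field K] (n : ℕ) (u : K) : K := ∑ k ∈ Finset.range n, u ^ k / (k ! : K)

/-- The polynomial part `∑ k < n, u ^ (k + 1) / ((k + 1) * (k + 2)!)` of the antiderivative of
`expTaylor (n + 2) u / u ^ 2`. -/
def expIntegralSeries {K : Type*} [Field K] (n : ℕ) (u : K) : K :=
  ∑ k ∈ Finset.range n, u ^ (k + 1) / ((k + 1 : K) * ((k + 2)! : K))

@[norm_cast]
theorem ratCast_expTaylor (n : ℕ) (q : ℚ) : ((expTaylor n q : ℚ) : ℝ) = expTaylor n (q : ℝ) := by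
  simp [expTaylor]

@[norm_cast]
theorem ratCast_expIntegralSeries (n : ℕ) (q : ℚ) :
    ((expIntegralSeries n q : ℚ) : ℝ) = expIntegralSeries n (q : ℝ) := by
  simp [expIntegralSeries]

theorem expIntegralSeries_mono {n : ℕ} {u v : ℝ} (hu : 0 ≤ u) (huv : u ≤ v) :
    expIntegralSeries n u ≤ expIntegralSeries n v := by
  unfold expIntegralSeries
  gcongr

theorem expTaylor_le_exp {u : ℝ} (hu : 0 ≤ u) (n : ℕ) : expTaylor n u ≤ exp u :=
  Real.sum_le_exp_of_nonneg hu n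

theorem exp_le_expTaylor_add {u : ℝ} {n : ℕ} (hu : 0 ≤ u) (hn : u / (n + 1) ≤ 1 / 2) :
    exp u ≤ expTaylor n u + u ^ n / n ! * 2 := by
  have h := Complex.exp_bound' (x := u) (n := n) (by simpa [abs_of_nonneg hu] using hn)
  rw [Complex.norm_of_nonneg hu] at h
  have hcast : Complex.exp u - ∑ m ∈ Finset.range n, (u : ℂ) ^ m / m ! =
      ((exp u - expTaylor n u : ℝ) : ℂ) := by
    simp [expTaylor]
  rw [hcast, Complex.norm_real] at h
  linarith [(le_abs_self _).trans h]

theorem one_le_expTaylor_succ {u : ℝ} (hu : 0 ≤ u) (n : ℕ) : 1 ≤ expTaylor (n + 1) u := by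
  rw [expTaylor, Finset.sum_range_succ', pow_zero, Nat.factorial_zero, Nat.cast_one, div_one]
  exact le_add_of_nonneg_left (Finset.sum_nonneg fun k _ => by positivity)

theorem exp_le_mul_expTaylor_sixty {u : ℝ} (hu : 0 ≤ u) (hu' : u ≤ 15) :
    exp u ≤ (1 + 1 / 10 ^ 9) * expTaylor 60 u := by
  have hremainder : u ^ 60 / 60 ! * 2 ≤ 1 / 10 ^ 9 :=
    calc u ^ 60 / 60 ! * 2 ≤ 15 ^ 60 / 60 ! * 2 := by gcongr
      _ ≤ 1 / 10 ^ 9 := by norm_num [Nat.factorial]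
  have h := exp_le_expTaylor_add (n := 60) hu (by norm_num; linarith)
  nlinarith [one_le_expTaylor_succ hu 59]

end ExpTaylor

section Li2

open scoped Nat

theorem Li2_exp {v : ℝ} (hv : log 2 ≤ v) : Li2 (exp v) = ∫ u in log 2..v, exp u / u ^ 2 := by
  have hlog2 : 0 < log 2 := log_pos one_lt_two
  have hpos : ∀ u ∈ uIcc (log 2) v, 0 < u := fun u hu => by
    rw [uIcc_of_le hv] at hu
    exact hlog2.trans_le hu.1
  have hcont : ContinuousOn (fun t => 1 / log t ^ 2) (exp '' uIcc (log 2) v) := by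
    refine continuousOn_const.div (.pow (continuousOn_log.mono ?_) 2) ?_
    · rintro _ ⟨u, -, rfl⟩
      exact (exp_pos u).ne'
    · rintro _ ⟨u, hu, rfl⟩
      rw [log_exp]
      exact (pow_pos (hpos u hu) 2).ne'
  have hsubst := intervalIntegral.integral_comp_mul_deriv' (a := log 2) (b := v)
    (fun u _ => hasDerivAt_exp u) continuous_exp.continuousOn hcont
  rw [exp_log two_pos] at hsubst
  rw [Li2, ← hsubst]
  simp only [Function.comp_apply, log_exp, one_div_mul_eq_div]

theorem Li2_mono {x y : ℝ} (hx : 2 ≤ x) (hxy : x ≤ y) : Li2 x ≤ Li2 y := by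
  have hint {a b : ℝ} (ha : 2 ≤ a) (hb : 2 ≤ b) :
      IntervalIntegrable (fun t => 1 / log t ^ 2) MeasureTheory.volume a b := by
    refine ContinuousOn.intervalIntegrable fun t ht => ContinuousAt.continuousWithinAt ?_
    have ht2 : 2 ≤ t := (le_min ha hb).trans ht.1
    have : t ≠ 0 := by linarith
    have : log t ≠ 0 := (log_pos (by linarith)).ne'
    fun_prop (disch := simp_all)
  rw [Li2, Li2, ← intervalIntegral.integral_add_adjacent_intervals (hint le_rfl hx)
    (hint hx (hx.trans hxy))]
  exact le_add_of_nonneg_right (intervalIntegral.integral_nonneg hxy fun t _ => by positivity)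

theorem hasDerivAt_expIntegralSeries (n : ℕ) {u : ℝ} (hu : u ≠ 0) :
    HasDerivAt (fun u => log u - u⁻¹ + expIntegralSeries n u) (expTaylor (n + 2) u / u ^ 2) u := by
  have hterm (k : ℕ) : HasDerivAt (fun u : ℝ => u ^ (k + 1) / ((k + 1 : ℝ) * ((k + 2)! : ℝ)))
      (u ^ k / (k + 2)!) u := by
    refine ((hasDerivAt_pow (k + 1) u).div_const _).congr_deriv ?_
    rw [Nat.cast_succ, add_tsub_cancel_right, mul_div_mul_left _ _ k.cast_add_one_ne_zero]
  have hcancel (k : ℕ) : u ^ (k + 1 + 1) / (k + 1 + 1)! / u ^ 2 = u ^ k / (k + 2)! := by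
    rw [div_right_comm, add_assoc, pow_add, mul_div_cancel_right₀ _ (pow_ne_zero 2 hu)]
  have hu2 : u / u ^ 2 = u⁻¹ := by field_simp
  refine (((hasDerivAt_log hu).fun_sub (hasDerivAt_inv hu)).fun_add
    (HasDerivAt.fun_sum fun k (_ : k ∈ Finset.range n) => hterm k)).congr_deriv ?_
  rw [expTaylor, Finset.sum_range_succ', Finset.sum_range_succ', add_div, add_div, Finset.sum_div]
  simp only [sub_neg_eq_add, hcancel, zero_add, pow_one, Nat.factorial_one, Nat.cast_one, div_one,
    hu2, pow_zero, Nat.factorial_zero]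
  ring

/-- An approximation to `Li2 (exp v)`: the integral over `[log 2, v]` of `exp u / u ^ 2` with `exp`
replaced by `expTaylor (n + 2)`. -/
noncomputable def Li2Approx (n : ℕ) (v : ℝ) : ℝ :=
  log v - v⁻¹ + expIntegralSeries n v - (log (log 2) - (log 2)⁻¹ + expIntegralSeries n (log 2))

theorem intervalIntegrable_div_sq {f : ℝ → ℝ} (hf : Continuous f) {v : ℝ} (hv : log 2 ≤ v) :
    IntervalIntegrable (fun u => f u / u ^ 2) MeasureTheory.volume (log 2) v := by
  refine (hf.continuousOn.div (continuousOn_pow 2) fun u hu => ?_).intervalIntegrable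
  rw [uIcc_of_le hv] at hu
  exact (pow_pos ((log_pos one_lt_two).trans_le hu.1) 2).ne'

theorem continuous_expTaylor (n : ℕ) : Continuous (expTaylor n : ℝ → ℝ) := by
  unfold expTaylor
  fun_prop

theorem integral_expTaylor_div_sq (n : ℕ) {v : ℝ} (hv : log 2 ≤ v) :
    ∫ u in log 2..v, expTaylor (n + 2) u / u ^ 2 = Li2Approx n v := by
  refine intervalIntegral.integral_eq_sub_of_hasDerivAt
    (f := fun u => log u - u⁻¹ + expIntegralSeries n u) (fun u hu => ?_)
    (intervalIntegrable_div_sq (continuous_expTaylor _) hv)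
  rw [uIcc_of_le hv] at hu
  exact hasDerivAt_expIntegralSeries n ((log_pos one_lt_two).trans_le hu.1).ne'

theorem Li2Approx_le_Li2_exp (n : ℕ) {v : ℝ} (hv : log 2 ≤ v) : Li2Approx n v ≤ Li2 (exp v) := by
  rw [Li2_exp hv, ← integral_expTaylor_div_sq n hv]
  refine intervalIntegral.integral_mono_on hv
    (intervalIntegrable_div_sq (continuous_expTaylor _) hv)
    (intervalIntegrable_div_sq continuous_exp hv) fun u hu => ?_
  gcongr
  exact expTaylor_le_exp ((log_pos one_lt_two).le.trans hu.1) _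

theorem Li2_exp_le_mul_Li2Approx {v : ℝ} (hv : log 2 ≤ v) (hv' : v ≤ 15) :
    Li2 (exp v) ≤ (1 + 1 / 10 ^ 9) * Li2Approx 58 v := by
  rw [Li2_exp hv, ← integral_expTaylor_div_sq 58 hv, ← intervalIntegral.integral_const_mul]
  refine intervalIntegral.integral_mono_on hv (intervalIntegrable_div_sq continuous_exp hv)
    ((intervalIntegrable_div_sq (continuous_expTaylor _) hv).const_mul _) fun u hu => ?_
  rw [← mul_div_assoc]
  gcongr
  exact exp_le_mul_expTaylor_sixty ((log_pos one_lt_two).le.trans hu.1) (hu.2.trans hv')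

theorem expIntegralSeries_log_two_bounds :
    0.39 ≤ expIntegralSeries 58 (log 2) ∧ expIntegralSeries 58 (log 2) ≤ 0.393 := by
  have hrat : 0.39 ≤ expIntegralSeries 58 (0.6931 : ℚ) ∧
      expIntegralSeries 58 (0.6932 : ℚ) ≤ 0.393 := by decide +kernel
  rify at hrat
  have := log_two_gt_d9
  have := log_two_lt_d9
  exact ⟨hrat.1.trans (expIntegralSeries_mono (by norm_num) (by linarith)),
    (expIntegralSeries_mono (by linarith) (by linarith)).trans hrat.2⟩

/-- Compares `v / log 2` with `exp 3`, so that the crude bounds `1 - w⁻¹ ≤ log w ≤ w - 1` near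
`w = 1` suffice. -/
theorem log_sub_log_log_two_bounds {v : ℝ} (hv : 14.12 ≤ v) (hv' : v ≤ 14.24) :
    3.0139 ≤ log v - log (log 2) ∧ log v - log (log 2) ≤ 3.0231 := by
  have h2 := log_two_gt_d9
  have h2' := log_two_lt_d9
  have hexp : 20.083 ≤ exp 3 := by
    calc (20.083 : ℝ) ≤ 2.7182 ^ 3 := by norm_num
      _ ≤ exp 1 ^ 3 := by gcongr; linarith [exp_one_gt_d9]
      _ = exp 3 := by rw [← exp_nat_mul]; norm_num
  have hexp' : exp 3 ≤ 20.086 := by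
    calc exp 3 = exp 1 ^ 3 := by rw [← exp_nat_mul]; norm_num
      _ ≤ 2.7183 ^ 3 := by gcongr; linarith [exp_one_lt_d9]
      _ ≤ 20.086 := by norm_num
  set w := v / (log 2 * exp 3) with hw
  have hpos : 0 < log 2 * exp 3 := by positivity
  have hw1 : 1.0141 ≤ w := by
    rw [hw, le_div_iff₀ hpos]
    nlinarith
  have hw2 : w ≤ 1.0231 := by
    rw [hw, div_le_iff₀ hpos]
    nlinarith
  have hlog : log v - log (log 2) = 3 + log w := by
    rw [hw, log_div (by linarith) hpos.ne', log_mul (by linarith) (exp_ne_zero 3), log_exp]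
    ring
  have hinv : w⁻¹ ≤ 0.9861 := inv_le_of_inv_le₀ (by norm_num) (by norm_num; linarith)
  rw [hlog]
  constructor
  · linarith [one_sub_inv_le_log_of_pos (show 0 < w by linarith)]
  · linarith [log_le_sub_one_of_pos (show 0 < w by linarith)]

theorem Li2Approx_bounds {v : ℝ} (hv : 14.12 ≤ v) (hv' : v ≤ 14.24) :
    expIntegralSeries 58 v + 3.99 ≤ Li2Approx 58 v ∧
      Li2Approx 58 v ≤ expIntegralSeries 58 v + 4.01 := by
  have hlog := log_sub_log_log_two_bounds hv hv'
  have hseries := expIntegralSeries_log_two_bounds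
  have hv1 : v⁻¹ ≤ 0.071 := inv_le_of_inv_le₀ (by norm_num) (by norm_num; linarith)
  have hv2 : 0.07 ≤ v⁻¹ := le_inv_of_le_inv₀ (by linarith) (by norm_num; linarith)
  have h2 : 1.442 ≤ (log 2)⁻¹ :=
    le_inv_of_le_inv₀ (by positivity) (by norm_num; linarith [log_two_lt_d9])
  have h2' : (log 2)⁻¹ ≤ 1.443 :=
    inv_le_of_inv_le₀ (by norm_num) (by norm_num; linarith [log_two_gt_d9])
  rw [Li2Approx]
  constructor <;> linarith

end Li2

section Signs

theorem d2_neg_of_exp_le {x v : ℝ} (hv : 14.12 ≤ v) (hv' : v ≤ 14.24) (hx : exp v ≤ x)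
    (hcount : piTwin x < 1.32026 * (expIntegralSeries 58 v + 3.99)) : d2 x < 0 := by
  have h2v : log 2 ≤ v := by linarith [log_two_lt_d9]
  have h2x : 2 ≤ exp v := (log_le_iff_le_exp two_pos).1 h2v
  have hLi2 : expIntegralSeries 58 v + 3.99 ≤ Li2 x :=
    (Li2Approx_bounds hv hv').1.trans ((Li2Approx_le_Li2_exp 58 h2v).trans (Li2_mono h2x hx))
  have hC2 := C2_bounds.1
  have : 1.32026 * (expIntegralSeries 58 v + 3.99) ≤ C2 * Li2 x := by gcongr; linarith
  rw [d2]
  linarith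

theorem d2_pos_of_le_exp {x v : ℝ} (hv : 14.12 ≤ v) (hv' : v ≤ 14.24) (h2x : 2 ≤ x)
    (hx : x ≤ exp v)
    (hcount : 1.32034 * ((1 + 1 / 10 ^ 9) * (expIntegralSeries 58 v + 4.01)) < piTwin x) :
    0 < d2 x := by
  have h2v : log 2 ≤ v := by linarith [log_two_lt_d9]
  have hLi2 : Li2 x ≤ (1 + 1 / 10 ^ 9) * (expIntegralSeries 58 v + 4.01) :=
    calc Li2 x ≤ Li2 (exp v) := Li2_mono h2x hx
      _ ≤ (1 + 1 / 10 ^ 9) * Li2Approx 58 v := Li2_exp_le_mul_Li2Approx h2v (by linarith)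
      _ ≤ _ := by gcongr; exact (Li2Approx_bounds hv hv').2
  have hC2 := C2_bounds
  have hnonneg : 0 ≤ Li2 x := by simpa [Li2] using Li2_mono le_rfl h2x
  have : C2 * Li2 x ≤ 1.32034 * ((1 + 1 / 10 ^ 9) * (expIntegralSeries 58 v + 4.01)) :=
    mul_le_mul hC2.2 hLi2 hnonneg (by norm_num)
  rw [d2]
  linarith

end Signs

section Samples

/-- The rows `(m, c, l)` of the table of sample points `6 * m + 1`, where `c` is the number of twin
prime pairs up to `6 * m + 1` and `l / 10 ^ 5` approximates `log (6 * m + 1)`, from below in the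
rows of even index and from above in those of odd index. -/
def samples : List (ℕ × ℕ × ℕ) :=
  [(227651, 10713, 1412732), (228260, 10746, 1413001), (228341, 10747, 1413035),
   (228433, 10755, 1413076), (228651, 10758, 1413171), (228680, 10762, 1413184),
   (229034, 10770, 1413338), (231313, 10875, 1414329), (232319, 10904, 1414762),
   (234930, 11023, 1415881), (236202, 11058, 1416420), (236257, 11062, 1416444),
   (236331, 11063, 1416474), (236840, 11087, 1416691), (236984, 11089, 1416750),
   (237100, 11096, 1416800), (237162, 11096, 1416825), (237247, 11104, 1416862),
   (237646, 11114, 1417029), (237825, 11128, 1417106), (238111, 11133, 1417225),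
   (238255, 11141, 1417286), (241102, 11230, 1418473), (249118, 11569, 1421745),
   (249924, 11592, 1422067), (250388, 11618, 1422253), (250734, 11627, 1422390),
   (251510, 11664, 1422700), (251702, 11667, 1422776), (251970, 11684, 1422883)]

/-- The integer `m` for which the sample point of index `i` is `6 * m + 1`. -/
def sampleIndex (i : ℕ) : ℕ := (samples.getD i (0, 0, 0)).1

/-- The number of twin prime pairs up to the sample point of index `i`. -/
def sampleCount (i : ℕ) : ℕ := (samples.getD i (0, 0, 0)).2.1

/-- The approximate logarithm of the sample point of index `i`. -/
def sampleLog (i : ℕ) : ℚ := (samples.getD i (0, 0, 0)).2.2 / 10 ^ 5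

theorem sampleIndex_lt_succ : ∀ i < 29, sampleIndex i < sampleIndex (i + 1) := by decide +kernel

theorem sampleIndex_bounds : ∀ i < 30, 227651 ≤ sampleIndex i ∧ sampleIndex i ≤ 252000 := by
  decide +kernel

theorem sampleLog_bounds : ∀ i < 30, 14.12 ≤ sampleLog i ∧ sampleLog i ≤ 14.24 := by
  decide +kernel

theorem sampleCount_succ : ∀ i < 29,
    sampleCount (i + 1) = sampleCount i + twinCount (sampleIndex i) (sampleIndex (i + 1)) := by
  decide +kernel

theorem sampleCount_zero : sampleCount 0 = 1 + twinCount 0 (sampleIndex 0) := by decide +kernel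

theorem sampleCount_eq {i : ℕ} (hi : i < 30) :
    sampleCount i = 1 + twinCount 0 (sampleIndex i) := by
  induction i with
  | zero => exact sampleCount_zero
  | succ i ih =>
    have hmono := sampleIndex_lt_succ i (by omega)
    have hle := (sampleIndex_bounds (i + 1) hi).2
    rw [sampleCount_succ i (by omega), ih (by omega), add_assoc,
      twinCount_add (Nat.zero_le _) hmono.le hle]

theorem piTwin_sample {i : ℕ} (hi : i < 30) : piTwin (6 * sampleIndex i + 1) = sampleCount i := by
  obtain ⟨hlo, hhi⟩ := sampleIndex_bounds i hi
  rw [piTwin_eq_twinCount (by omega) hhi, sampleCount_eq hi]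

theorem sample_certificate_even : ∀ i < 30, Even i →
    (1 + 1 / 10 ^ 9) * expTaylor 60 (sampleLog i) ≤ 6 * sampleIndex i + 1 ∧
      sampleCount i < 1.32026 * (expIntegralSeries 58 (sampleLog i) + 3.99) := by
  decide +kernel

theorem sample_certificate_odd : ∀ i < 30, ¬ Even i →
    6 * sampleIndex i + 1 ≤ expTaylor 60 (sampleLog i) ∧
      1.32034 * ((1 + 1 / 10 ^ 9) * (expIntegralSeries 58 (sampleLog i) + 4.01)) <
        sampleCount i := by
  decide +kernel

theorem sampleLog_real_bounds {i : ℕ} (hi : i < 30) :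
    (14.12 : ℝ) ≤ sampleLog i ∧ (sampleLog i : ℝ) ≤ 14.24 := by
  have h := sampleLog_bounds i hi
  rify at h
  exact h

theorem d2_sample_neg {i : ℕ} (hi : i < 30) (heven : Even i) :
    d2 (6 * sampleIndex i + 1) < 0 := by
  have hcert := sample_certificate_even i hi heven
  rify at hcert
  obtain ⟨hlog, hcount⟩ := hcert
  obtain ⟨hv, hv'⟩ := sampleLog_real_bounds hi
  refine d2_neg_of_exp_le hv hv' ?_ ?_
  · exact (exp_le_mul_expTaylor_sixty (by linarith) (by linarith)).trans hlog
  · rwa [piTwin_sample hi]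

theorem d2_sample_pos {i : ℕ} (hi : i < 30) (hodd : ¬ Even i) :
    0 < d2 (6 * sampleIndex i + 1) := by
  have hcert := sample_certificate_odd i hi hodd
  rify at hcert
  obtain ⟨hlog, hcount⟩ := hcert
  obtain ⟨hv, hv'⟩ := sampleLog_real_bounds hi
  have hm : (227651 : ℝ) ≤ sampleIndex i := by exact_mod_cast (sampleIndex_bounds i hi).1
  refine d2_pos_of_le_exp hv hv' (by linarith) ?_ ?_
  · exact hlog.trans (expTaylor_le_exp (by linarith) 60)
  · rwa [piTwin_sample hi]

end Samples

/-- `d₂` has at least 29 sign changes on the interval `(2, 2^21)`. -/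
theorem d2_sign_changes_29 :
    ∃ x : ℕ → ℝ,
      (∀ i ≤ 29, 2 < x i ∧ x i < 2 ^ 21) ∧
      (∀ i < 29, x i < x (i + 1)) ∧
      (∀ i < 29, d2 (x i) * d2 (x (i + 1)) < 0) := by
  refine ⟨fun i => 6 * sampleIndex i + 1, fun i hi => ?_, fun i hi => ?_, fun i hi => ?_⟩
  · obtain ⟨hlo, hhi⟩ := sampleIndex_bounds i (by omega)
    rify at hlo hhi
    constructor <;> dsimp only <;> linarith
  · have hlt := sampleIndex_lt_succ i hi
    rify at hlt
    dsimp only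
    linarith
  · by_cases heven : Even i
    · exact mul_neg_of_neg_of_pos (d2_sample_neg (by omega) heven)
        (d2_sample_pos (by omega) (by simpa [Nat.even_add_one] using heven))
    · exact mul_neg_of_pos_of_neg (d2_sample_pos (by omega) heven)
        (d2_sample_neg (by omega) (Nat.even_add_one.2 heven))
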